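/- Let G be a non-complete graph on n vertices with minimum degree δ (so n − δ − 1 ≥ 1), and let n_u be the number of universal vertices of G (vertices adjacent to all other vertices). Then box(G) ≥ (n − n_u)/(2(n − δ − 1)). -/

import Mathlib

/-!
Let `d = n - δ - 1` be the maximum degree of the complement of `G`. In an interval graph `I ≥ G`,
let `a` be a vertex whose interval ends first and `b` a vertex whose interval begins last. If the
interval of `v` is disjoint from some other interval, then it is disjoint from that of `a` or that
of `b` (`exists_pair_of_interval`). Hence the vertices which are not universal in `I` all lie in
`N(a) ∪ N(b)`, with neighbourhoods taken in the complement of `G`, and there are at most `2 * d` of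
them. A vertex not universal in `G = ⨅ i, I i` is not universal in some `I i`, so `k` interval
graphs give `n - n_u ≤ 2 * d * k`.

As `boxicity` is the infimum of a set of naturals, with value `0` on the empty set, it is also
needed that every finite graph is an intersection of finitely many interval graphs
(`exists_interval_representation`): for each non-edge, use the complete graph minus that edge.
-/

/-- `I` is an interval graph: it can be represented by assigning to each vertex
a closed real interval so that two distinct vertices are adjacent in `I`
iff their intervals intersect. -/
def IsIntervalGraph {V : Type*} (I : SimpleGraph V) : Prop :=
  ∃ f : V → Set ℝ, (∀ v, ∃ a b : ℝ, a ≤ b ∧ f v = Set.Icc a b) ∧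
    ∀ u v : V, u ≠ v → (I.Adj u v ↔ (f u ∩ f v).Nonempty)

/-- The boxicity of `G`: the least `k` such that `G` is the intersection
(infimum) of `k` interval graphs on the same vertex set. -/
noncomputable def boxicity {V : Type*} (G : SimpleGraph V) : ℕ :=
  sInf {k : ℕ | ∃ I : Fin k → SimpleGraph V,
    (∀ i, IsIntervalGraph (I i)) ∧ G = ⨅ i, I i}

/-- The number of edges of `G`. -/
noncomputable def numEdges {V : Type*} (G : SimpleGraph V) : ℕ :=
  G.edgeSet.ncard

/-- The complete graph with the edge `xy` removed is an interval graph: `x` and `y` get the two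
endpoints of an interval given to all other vertices. -/
lemma isIntervalGraph_top_deleteEdge {V : Type*} [DecidableEq V] {x y : V} (hxy : x ≠ y) :
    IsIntervalGraph ((⊤ : SimpleGraph V).deleteEdges {s(x, y)}) := by
  refine ⟨fun v => Set.Icc (if v = y then 1 else 0) (if v = x then 0 else 1), ?_, ?_⟩
  · intro v
    refine ⟨_, _, ?_, rfl⟩
    split_ifs with h1 h2 <;> simp_all
  · intro u v huv
    rw [Set.Icc_inter_Icc, Set.nonempty_Icc]
    simp only [SimpleGraph.deleteEdges_adj, SimpleGraph.top_adj, Set.mem_singleton_iff,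
      Sym2.eq_iff]
    by_cases h1 : u = x <;> by_cases h2 : u = y <;> by_cases h3 : v = x <;>
      by_cases h4 : v = y <;> simp_all

lemma exists_interval_representation {V : Type*} [Fintype V] [DecidableEq V]
    (G : SimpleGraph V) :
    ∃ k : ℕ, ∃ I : Fin k → SimpleGraph V, (∀ i, IsIntervalGraph (I i)) ∧ G = ⨅ i, I i := by
  classical
  let S := {p : V × V // p.1 ≠ p.2 ∧ ¬ G.Adj p.1 p.2}
  let e : S ≃ Fin (Fintype.card S) := Fintype.equivFin S
  refine ⟨Fintype.card S, fun i => (⊤ : SimpleGraph V).deleteEdges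
    {s((e.symm i).1.1, (e.symm i).1.2)},
    fun i => isIntervalGraph_top_deleteEdge (e.symm i).2.1, ?_⟩
  ext u v
  simp only [SimpleGraph.iInf_adj, SimpleGraph.deleteEdges_adj, SimpleGraph.top_adj,
    Set.mem_singleton_iff]
  constructor
  · intro h
    refine ⟨fun i => ⟨h.ne, fun hs => ?_⟩, h.ne⟩
    have h2 := (e.symm i).2.2
    rw [← SimpleGraph.mem_edgeSet, ← hs] at h2
    exact h2 h
  · rintro ⟨h, huv⟩
    by_contra hn
    have h2 := (h (e ⟨(u, v), huv, hn⟩)).2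
    simp at h2

/-- In an interval graph on a nonempty finite vertex set, every vertex with a non-neighbour is a
non-neighbour of one of two fixed vertices: `a`, whose interval ends first, or `b`, whose interval
begins last. -/
lemma exists_pair_of_interval {V : Type*} [Fintype V] [Nonempty V] {I : SimpleGraph V}
    (hI : IsIntervalGraph I) :
    ∃ a b : V, ∀ v w : V, v ≠ w → ¬ I.Adj v w → Iᶜ.Adj a v ∨ Iᶜ.Adj b v := by
  obtain ⟨f, hf, hadj⟩ := hI
  choose l r hlr hfl using hf
  obtain ⟨a, ha⟩ := Finite.exists_min r
  obtain ⟨b, hb⟩ := Finite.exists_max l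
  have key : ∀ u v, r u < l v → Iᶜ.Adj u v := by
    intro u v huv
    have hne : u ≠ v := by
      rintro rfl
      exact absurd (hlr u) (not_le.mpr huv)
    rw [SimpleGraph.compl_adj, hadj u v hne, hfl, hfl, Set.Icc_inter_Icc, Set.nonempty_Icc]
    refine ⟨hne, fun h => ?_⟩
    exact absurd (((le_sup_right).trans h).trans inf_le_left) (not_le.mpr huv)
  refine ⟨a, b, fun v w hvw hn => ?_⟩
  rw [hadj v w hvw, hfl, hfl, Set.Icc_inter_Icc, Set.nonempty_Icc, sup_le_iff, le_inf_iff,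
    le_inf_iff] at hn
  by_cases h : r v < l w
  · exact Or.inr (key v b (h.trans_le (hb w))).symm
  · refine Or.inl (key a v ((ha w).trans_lt ?_))
    by_contra h'
    exact hn ⟨⟨hlr v, not_lt.mp h'⟩, not_lt.mp h, hlr w⟩

theorem box_lower_bound_min_degree {V : Type*} [Fintype V] [DecidableEq V]
    (G : SimpleGraph V) [DecidableRel G.Adj] (hG : G ≠ ⊤)
    (nu : ℕ)
    (hnu : nu = (Finset.univ.filter (fun v : V => ∀ w : V, w ≠ v → G.Adj v w)).card) :
    (boxicity G : ℝ) ≥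
      ((Fintype.card V : ℝ) - nu) /
        (2 * ((Fintype.card V : ℝ) - G.minDegree - 1)) := by
  have hne : Nonempty V := by
    by_contra h
    rw [not_nonempty_iff] at h
    exact hG (Subsingleton.elim _ _)
  have hbox : ∃ I : Fin (boxicity G) → SimpleGraph V,
      (∀ i, IsIntervalGraph (I i)) ∧ G = ⨅ i, I i :=
    Nat.sInf_mem (exists_interval_representation G)
  obtain ⟨I, hI, hGI⟩ := hbox
  choose a b hab using fun i => exists_pair_of_interval (hI i)
  have hδ : G.minDegree + 1 ≤ Fintype.card V :=
    (G.minDegree_le_degree hne.some).trans_lt (G.degree_lt_card_verts _)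
  have hdeg : ∀ v, (Gᶜ.neighborFinset v).card ≤ Fintype.card V - G.minDegree - 1 := by
    intro v
    rw [SimpleGraph.card_neighborFinset_eq_degree, SimpleGraph.degree_compl]
    have := G.minDegree_le_degree v
    omega
  have hle : ∀ i, G ≤ I i := fun i => hGI.le.trans (iInf_le I i)
  have hsub : Finset.univ.filter (fun v : V => ¬ ∀ w : V, w ≠ v → G.Adj v w) ⊆
      Finset.univ.biUnion
        (fun i => Gᶜ.neighborFinset (a i) ∪ Gᶜ.neighborFinset (b i)) := by
    intro v hv
    rw [Finset.mem_filter] at hv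
    have hv := hv.2
    push Not at hv
    obtain ⟨w, hwv, hn⟩ := hv
    have hex : ∃ i, ¬ (I i).Adj v w := by
      by_contra! hall
      apply hn
      rw [hGI, SimpleGraph.iInf_adj]
      exact ⟨hall, hwv.symm⟩
    obtain ⟨i, hi⟩ := hex
    simp only [Finset.mem_biUnion, Finset.mem_univ, true_and, Finset.mem_union,
      SimpleGraph.mem_neighborFinset]
    exact ⟨i, (hab i v w hwv.symm hi).imp
      (fun h => compl_le_compl (hle i) h) (fun h => compl_le_compl (hle i) h)⟩
  have hcard := (Finset.card_le_card hsub).trans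
    (Finset.card_biUnion_le_card_mul _ _ (2 * (Fintype.card V - G.minDegree - 1)) fun i _ =>
      (Finset.card_union_le _ _).trans (by have := hdeg (a i); have := hdeg (b i); omega))
  rw [Finset.card_univ, Fintype.card_fin] at hcard
  have hsplit := Finset.card_filter_add_card_filter_not (s := (Finset.univ : Finset V))
    (fun v : V => ∀ w : V, w ≠ v → G.Adj v w)
  rw [← hnu, Finset.card_univ] at hsplit
  have hd : ((Fintype.card V - G.minDegree - 1 : ℕ) : ℝ) =
      (Fintype.card V : ℝ) - G.minDegree - 1 := by
    rw [Nat.cast_sub (by omega), Nat.cast_sub (by omega), Nat.cast_one]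
  rw [← hd]
  refine div_le_of_le_mul₀ (by positivity) (by positivity) ?_
  rw [sub_le_iff_le_add]
  have hfin : Fintype.card V ≤ boxicity G * (2 * (Fintype.card V - G.minDegree - 1)) + nu := by
    omega
  exact_mod_cast hfin
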